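/- Let β > 1 and let f be analytic on 𝔻 with f(0) = 0, f'(0) = 1, f(z) ≠ 0 on 𝔻 \ {0}, and Re(z f'(z)/f(z)) < β for all z ∈ 𝔻 \ {0} (i.e. f ∈ M(β)). Then z f'(z)/f(z) ∈ Ω_car for every z with 0 < |z| < 1/(4β − 3). -/

import Mathlib

open Complex Metric

def omegaCar : Set ℂ := {w : ℂ | ∃ u : ℂ, ‖u‖ < 1 ∧ w = 1 + u + u ^ 2 / 2}

def SCar (f : ℂ → ℂ) : Prop :=
  DifferentiableOn ℂ f (Metric.ball (0 : ℂ) 1) ∧ f 0 = 0 ∧ deriv f 0 = 1 ∧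
    (∀ z : ℂ, ‖z‖ < 1 → z ≠ 0 → f z ≠ 0) ∧
    (∀ z : ℂ, ‖z‖ < 1 → z ≠ 0 → z * deriv f z / f z ∈ omegaCar)

/-!
Write `f z = z * g z`, where `g = dslope f 0` has no zeros in the disk. Then
`z * f' z / f z - 1 = z * g' z / g z` is holomorphic, vanishes at `0` and has real part at most
`β - 1`, so Borel–Carathéodory bounds it by `2 (β - 1) ‖z‖ / (1 - ‖z‖)`, which is less than `1 / 2`
exactly when `‖z‖ < 1 / (4 β - 3)`. Since `1 + u + u ^ 2 / 2 = 1 + ((1 + u) ^ 2 - 1) / 2`, points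
within `1 / 2` of `1` are reached by choosing `1 + u` to be a square root in the right half-plane.
-/

section DSlope

variable {𝕜 : Type*} [NontriviallyNormedField 𝕜] {a b : 𝕜}

theorem dslope_ne_zero {E : Type*} [NormedAddCommGroup E] [NormedSpace 𝕜 E] {f : 𝕜 → E}
    (hfa : f a = 0) (hderiv : deriv f a ≠ 0) (hfb : b ≠ a → f b ≠ 0) : dslope f a b ≠ 0 := by
  rcases eq_or_ne b a with rfl | hba
  · rwa [dslope_same]
  · intro h
    exact hfb hba (by rw [← sub_smul_dslope_of_zero hfa, h, smul_zero])

theorem sub_mul_logDeriv_eq_one_add_sub_mul_logDeriv_dslope {f : 𝕜 → 𝕜} (hfa : f a = 0)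
    (hba : b ≠ a) (hfb : f b ≠ 0) (hdf : DifferentiableAt 𝕜 f b) :
    (b - a) * logDeriv f b = 1 + (b - a) * logDeriv (dslope f a) b := by
  have hsub : b - a ≠ 0 := sub_ne_zero.mpr hba
  have hfactor : f = fun x ↦ (x - a) * dslope f a x :=
    funext fun x ↦ (sub_smul_dslope_of_zero hfa x).symm
  have hdslope : dslope f a b ≠ 0 := right_ne_zero_of_mul (congrFun hfactor b ▸ hfb)
  have hlog : logDeriv f b = 1 / (b - a) + logDeriv (dslope f a) b := by
    conv_lhs => rw [hfactor]
    rw [logDeriv_mul b hsub hdslope (by fun_prop) ((differentiableAt_dslope_of_ne hba).mpr hdf),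
      logDeriv_apply (fun x ↦ x - a), deriv_sub_const, deriv_id'']
  rw [hlog, mul_add, mul_one_div_cancel hsub]

end DSlope

theorem norm_mul_logDeriv_sub_one_le {f : ℂ → ℂ} {R β : ℝ} {z : ℂ} (hβ : 1 < β)
    (hf : DifferentiableOn ℂ f (ball 0 R)) (hf0 : f 0 = 0) (hf' : deriv f 0 ≠ 0)
    (hne : ∀ w ∈ ball 0 R, w ≠ 0 → f w ≠ 0)
    (hre : ∀ w ∈ ball 0 R, w ≠ 0 → (w * logDeriv f w).re ≤ β)
    (hz : z ∈ ball 0 R) (hz0 : z ≠ 0) :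
    ‖z * logDeriv f z - 1‖ ≤ 2 * (β - 1) * ‖z‖ / (R - ‖z‖) := by
  have hR : 0 < R := pos_of_mem_ball hz
  set g := dslope f 0
  have hg : DifferentiableOn ℂ g (ball 0 R) :=
    (differentiableOn_dslope (ball_mem_nhds 0 hR)).mpr hf
  have hg_ne : ∀ w ∈ ball 0 R, g w ≠ 0 := fun w hw ↦ dslope_ne_zero hf0 hf' (hne w hw)
  have hfg : ∀ w ∈ ball 0 R, w ≠ 0 → w * logDeriv f w = 1 + w * logDeriv g w := fun w hw hw0 ↦ by
    simpa only [sub_zero] using sub_mul_logDeriv_eq_one_add_sub_mul_logDeriv_dslope hf0 hw0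
      (hne w hw hw0) (hf.differentiableAt (isOpen_ball.mem_nhds hw))
  have hre_g : Set.MapsTo (fun w ↦ w * logDeriv g w) (ball 0 R) {w | w.re ≤ β - 1} := by
    intro w hw
    rcases eq_or_ne w 0 with rfl | hw0
    · simpa using hβ.le
    · have h := hre w hw hw0
      rw [hfg w hw hw0, add_re, one_re] at h
      exact le_sub_iff_add_le'.mpr h
  rw [hfg z hz hz0, add_sub_cancel_left]
  exact borelCaratheodory_zero (sub_pos.mpr hβ)
    (differentiableOn_id.mul ((hg.deriv isOpen_ball).div hg hg_ne)) hre_g hR hz (zero_mul _)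

theorem norm_sub_one_le_norm_sq_sub_one {s : ℂ} (hs : 0 ≤ s.re) : ‖s - 1‖ ≤ ‖s ^ 2 - 1‖ := by
  have hadd : 1 ≤ ‖s + 1‖ := calc
    1 ≤ (s + 1).re := by rw [add_re, one_re]; linarith
    _ ≤ ‖s + 1‖ := re_le_norm _
  calc ‖s - 1‖ ≤ ‖s + 1‖ * ‖s - 1‖ := le_mul_of_one_le_left (norm_nonneg _) hadd
    _ = ‖s ^ 2 - 1‖ := by rw [← norm_mul]; ring_nf

theorem ball_one_half_subset_omegaCar : ball 1 (1 / 2) ⊆ omegaCar := by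
  intro w hw
  rw [mem_ball_iff_norm] at hw
  set s : ℂ := (1 + 2 * (w - 1)) ^ (2⁻¹ : ℂ) with hs
  have hs_sq : s ^ 2 = 1 + 2 * (w - 1) := cpow_ofNat_inv_pow _ 2
  have hs_re : 0 ≤ s.re := by rw [hs, cpow_inv_two_re]; positivity
  refine ⟨s - 1, ?_, by linear_combination -hs_sq / 2⟩
  calc ‖s - 1‖ ≤ ‖s ^ 2 - 1‖ := norm_sub_one_le_norm_sq_sub_one hs_re
    _ = 2 * ‖w - 1‖ := by rw [hs_sq, add_sub_cancel_left, norm_mul, norm_ofNat]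
    _ < 1 := by linarith

theorem stmt_17 (β : ℝ) (hβ : 1 < β) (f : ℂ → ℂ)
    (hfd : DifferentiableOn ℂ f (Metric.ball (0 : ℂ) 1))
    (hf0 : f 0 = 0) (hf1 : deriv f 0 = 1)
    (hfne : ∀ z : ℂ, ‖z‖ < 1 → z ≠ 0 → f z ≠ 0)
    (hM : ∀ z : ℂ, ‖z‖ < 1 → z ≠ 0 → (z * deriv f z / f z).re < β) :
    ∀ z : ℂ, z ≠ 0 → ‖z‖ < 1 / (4 * β - 3) → z * deriv f z / f z ∈ omegaCar := by
  intro z hz0 hz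
  have hz_mul : ‖z‖ * (4 * β - 3) < 1 := (lt_div_iff₀ (by linarith)).mp hz
  have hz1 : ‖z‖ < 1 := by nlinarith [norm_nonneg z]
  rw [mul_div_assoc, ← logDeriv_apply]
  apply ball_one_half_subset_omegaCar
  rw [mem_ball_iff_norm]
  calc ‖z * logDeriv f z - 1‖ ≤ 2 * (β - 1) * ‖z‖ / (1 - ‖z‖) := by
        refine norm_mul_logDeriv_sub_one_le hβ hfd hf0 (hf1 ▸ one_ne_zero)
          (fun w hw ↦ hfne w (mem_ball_zero_iff.mp hw)) (fun w hw hw0 ↦ ?_)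
          (mem_ball_zero_iff.mpr hz1) hz0
        rw [logDeriv_apply, ← mul_div_assoc]
        exact (hM w (mem_ball_zero_iff.mp hw) hw0).le
    _ < 1 / 2 := by rw [div_lt_iff₀ (by linarith)]; linarith
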